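/- For every integer K ≥ 3 and every integer T with T > 36·log(K) there exists a fixed-budget strategy π with horizon T (the PD-MTB algorithm) such that for every σ > 0 and every σ²-sub-Gaussian K-armed bandit problem ν whose means (μ_k)_{k=1}^K satisfy the relaxed monotonicity condition — there exists k₀ ∈ {0, 1, …, K} with μ_j ≤ τ for all j ≤ k₀ and μ_j ≥ τ for all j ≥ k₀ + 1 — the probability of error satisfies e_T^{ν,π} ≤ exp(−(1/48)·T·Δ_min²/σ² + 12·log(K)), where Δ_min = min_{k∈[K]} |μ_k − τ|. -/

import Mathlib

open MeasureTheory

/-- Law of the history `(Y_1, …, Y_n)` of a fixed-budget strategy: at round `t + 1`, given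
the past history `h : Fin t → ℝ`, the sampling rule `π` selects the arm `π t h` and the
observation is drawn from `ν (π t h)` (sequential / Ionescu–Tulcea composition). -/
noncomputable def histMeasure {K : ℕ} (ν : Fin K → Measure ℝ)
    (π : (t : ℕ) → (Fin t → ℝ) → Fin K) : (n : ℕ) → Measure (Fin n → ℝ)
  | 0 => Measure.dirac (fun i => Fin.elim0 i)
  | n + 1 => (histMeasure ν π n).bind (fun h => (ν (π n h)).map (Fin.snoc h))

/-- The error event: some arm is misclassified. `Qhat y k = true` encodes the label `+1`
(i.e. the prediction that `μ k ≥ τ`), `false` encodes the label `-1`. -/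
def errSet {K T : ℕ} (Qhat : (Fin T → ℝ) → Fin K → Bool) (μ : Fin K → ℝ) (τ : ℝ) :
    Set (Fin T → ℝ) :=
  {y | ∃ k, (Qhat y k = true) ≠ (τ ≤ μ k)}

/-- A distribution `ν` with mean `m` is `σ2`-sub-Gaussian if
`∫ exp (t (x − m)) dν(x) ≤ exp (σ2 t² / 2)` for all `t : ℝ`. -/
def IsSubGaussianArm (σ2 : ℝ) (m : ℝ) (ν : Measure ℝ) : Prop :=
  ∀ t : ℝ, ∫⁻ x, ENNReal.ofReal (Real.exp (t * (x - m))) ∂ν ≤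
    ENNReal.ofReal (Real.exp (σ2 * t ^ 2 / 2))

/-- The relaxed monotonicity condition (Remark 2): there is a (1-based) index
`k₀ ∈ {0, …, K}` with `μ_j ≤ τ` for all `j ≤ k₀` and `μ_j ≥ τ` for all `j ≥ k₀ + 1`
(stated here with 0-based indices `j : Fin K`, arm `j` being the (j+1)-st arm). -/
def RelaxedMonotone {K : ℕ} (μ : Fin K → ℝ) (τ : ℝ) : Prop :=
  ∃ k0 : ℕ, k0 ≤ K ∧ ∀ j : Fin K, ((j : ℕ) < k0 → μ j ≤ τ) ∧ (k0 ≤ (j : ℕ) → τ ≤ μ j)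


namespace PDMTB

/-- discrete part `(n, j, l, i)` and the three running sums. -/
abbrev St := (ℕ × ℕ × ℕ × ℕ) × (Fin 3 → ℝ)

def qry (D l i : ℕ) (g : Fin 3) : ℕ :=
  if g = 0 then (i * 2 ^ D) ⌈/⌉ (2 ^ l)
  else if g = 1 then ((2 * i + 1) * 2 ^ D) ⌈/⌉ (2 ^ (l + 1))
  else ((i + 1) * 2 ^ D) ⌈/⌉ (2 ^ l)

def vote (K c : ℕ) (s : ℝ) : Prop := c = 0 ∨ (c ≤ K ∧ s < 0)

def up (l i : ℕ) : ℕ × ℕ := if l = 0 then (0, 0) else (l - 1, i / 2)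

open Classical in
noncomputable def move (l i : ℕ) (a b c : Prop) : ℕ × ℕ :=
  if a ∧ ¬ c then (if b then (l + 1, 2 * i + 1) else (l + 1, 2 * i)) else up l i

def grp (m j : ℕ) : Fin 3 := if j < m then 0 else if j < 2 * m then 1 else 2

def rem (m : ℕ) (g : Fin 3) (j : ℕ) : ℕ :=
  if g = 0 then min m (m - j) else if g = 1 then min m (2 * m - j) else min m (3 * m - j)

noncomputable def upd (m : ℕ) (τ : ℝ) (j : ℕ) (S : Fin 3 → ℝ) (y : ℝ) : Fin 3 → ℝ :=
  fun g => if g = grp m j then S g + (y - τ) else S g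

noncomputable def mv (K D l i : ℕ) (S : Fin 3 → ℝ) : ℕ × ℕ :=
  move l i (vote K (qry D l i 0) (S 0)) (vote K (qry D l i 1) (S 1)) (vote K (qry D l i 2) (S 2))

noncomputable def nxt (K N D m : ℕ) (τ : ℝ) (x : St) (y : ℝ) : St :=
  if N ≤ x.1.1 then x
  else if x.1.2.1 + 1 < 3 * m then
    ((x.1.1, x.1.2.1 + 1, x.1.2.2), upd m τ x.1.2.1 x.2 y)
  else ((x.1.1 + 1, 0, mv K D x.1.2.2.1 x.1.2.2.2 (upd m τ x.1.2.1 x.2 y)), 0)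

def armOf (K : ℕ) (hK : 0 < K) (c : ℕ) : Fin K := ⟨min (c - 1) (K - 1), by omega⟩

def arm (K : ℕ) (hK : 0 < K) (D m : ℕ) (x : St) : Fin K :=
  armOf K hK (qry D x.1.2.2.1 x.1.2.2.2 (grp m x.1.2.1))

noncomputable def X (K N D m : ℕ) (τ : ℝ) : (t : ℕ) → (Fin t → ℝ) → St
  | 0, _ => ((0, 0, 0, 0), 0)
  | t + 1, h => nxt K N D m τ (X K N D m τ t (fun i => h i.castSucc)) (h (Fin.last t))

/-! ### Measurability -/

lemma measurableSet_vote (K c : ℕ) {α : Type*} [MeasurableSpace α] (f : α → ℝ)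
    (hf : Measurable f) : MeasurableSet {a | vote K c (f a)} := by
  unfold vote
  have h : MeasurableSet {a | f a < 0} := measurableSet_lt hf measurable_const
  exact (MeasurableSet.const _).union ((MeasurableSet.const _).inter h)

lemma measurable_upd (m : ℕ) (τ : ℝ) (j : ℕ) :
    Measurable (fun p : (Fin 3 → ℝ) × ℝ => upd m τ j p.1 p.2) := by
  unfold upd
  refine measurable_pi_lambda _ fun g => ?_
  split_ifs <;> fun_prop

lemma measurable_mv (K D l i : ℕ) : Measurable (mv K D l i) := by
  classical
  unfold mv move
  have h0 := fun g => measurableSet_vote K (qry D l i g) (fun S : Fin 3 → ℝ => S g)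
    (measurable_pi_apply g)
  refine Measurable.ite ((h0 0).inter (h0 2).compl) ?_ measurable_const
  exact Measurable.ite (h0 1) measurable_const measurable_const

lemma measurable_nxt (K N D m : ℕ) (τ : ℝ) :
    Measurable (fun p : St × ℝ => nxt K N D m τ p.1 p.2) := by
  have : Measurable (fun p : (ℕ × ℕ × ℕ × ℕ) × ((Fin 3 → ℝ) × ℝ) =>
      nxt K N D m τ (p.1, p.2.1) p.2.2) := by
    refine measurable_from_prod_countable_right fun d => ?_
    simp only [nxt]
    split_ifs
    · fun_prop
    · exact measurable_const.prodMk (measurable_upd m τ _)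
    · refine Measurable.prodMk (measurable_const.prodMk (measurable_const.prodMk ?_))
        measurable_const
      exact (measurable_mv K D _ _).comp (measurable_upd m τ _)
  exact this.comp (f := fun p : St × ℝ => (p.1.1, (p.1.2, p.2))) (by fun_prop)

lemma measurable_X (K N D m : ℕ) (τ : ℝ) (t : ℕ) : Measurable (X K N D m τ t) := by
  induction t with
  | zero => exact measurable_const
  | succ t ih =>
    have h1 : Measurable (fun h : Fin (t + 1) → ℝ => X K N D m τ t (fun i => h i.castSucc)) :=
      ih.comp (by fun_prop)
    exact (measurable_nxt K N D m τ).comp (h1.prodMk (measurable_pi_apply (Fin.last t)))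

lemma measurable_arm (K : ℕ) (hK : 0 < K) (D m : ℕ) : Measurable (arm K hK D m) := by
  have : Measurable (fun d : ℕ × ℕ × ℕ × ℕ => armOf K hK (qry D d.2.2.1 d.2.2.2 (grp m d.2.1))) :=
    measurable_of_countable _
  exact this.comp measurable_fst

lemma measurable_step {K : ℕ} (ν : Fin K → Measure ℝ) [∀ k, IsProbabilityMeasure (ν k)]
    (n : ℕ) (f : (Fin n → ℝ) → Fin K) (hf : Measurable f) :
    Measurable (fun h : Fin n → ℝ => (ν (f h)).map (Fin.snoc (α := fun _ => ℝ) h)) := by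
  have hs : Measurable (fun p : (Fin n → ℝ) × ℝ => Fin.snoc (α := fun _ => ℝ) p.1 p.2) := by
    refine measurable_pi_lambda _ fun i => ?_
    refine Fin.lastCases ?_ (fun i => ?_) i
    · simpa using measurable_snd
    · simp only [Fin.snoc_castSucc]; fun_prop
  refine Measure.measurable_of_measurable_coe _ fun s hms => ?_
  have h1 : ∀ h : Fin n → ℝ, (ν (f h)).map (Fin.snoc (α := fun _ => ℝ) h) s
      = ν (f h) (Prod.mk h ⁻¹' ((fun p : (Fin n → ℝ) × ℝ =>
        Fin.snoc (α := fun _ => ℝ) p.1 p.2) ⁻¹' s)) := by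
    intro h
    have hsh : Measurable (Fin.snoc (α := fun _ => ℝ) h) := hs.comp measurable_prodMk_left
    rw [Measure.map_apply hsh hms]
    rfl
  simp_rw [h1]
  have : Measurable (fun p : Fin K × (Fin n → ℝ) => ν p.1 (Prod.mk p.2 ⁻¹' ((fun p : (Fin n → ℝ) × ℝ =>
        Fin.snoc (α := fun _ => ℝ) p.1 p.2) ⁻¹' s))) := by
    refine measurable_from_prod_countable_right fun k => ?_
    exact measurable_measure_prodMk_left (ν := ν k) (hs hms)
  exact this.comp (hf.prodMk measurable_id)

lemma measurable_snoc {n : ℕ} (h : Fin n → ℝ) :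
    Measurable (Fin.snoc (α := fun _ => ℝ) h) := by
  refine measurable_pi_lambda _ fun i => ?_
  refine Fin.lastCases ?_ (fun i => ?_) i
  · simp only [Fin.snoc_last]; fun_prop
  · simp only [Fin.snoc_castSucc]; fun_prop

lemma lyapunov {K : ℕ} (hK : 0 < K) (N D m : ℕ) (τ : ℝ) (ν : Fin K → Measure ℝ)
    [∀ k, IsProbabilityMeasure (ν k)] (V : St → ENNReal) (hV : Measurable V)
    (hstep : ∀ x, ∫⁻ y, V (nxt K N D m τ x y) ∂(ν (arm K hK D m x)) ≤ V x) (t : ℕ) :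
    ∫⁻ h, V (X K N D m τ t h)
      ∂(histMeasure ν (fun t h => arm K hK D m (X K N D m τ t h)) t) ≤ V ((0, 0, 0, 0), 0) := by
  have hVX : ∀ t, Measurable (fun h => V (X K N D m τ t h)) := fun t =>
    hV.comp (measurable_X ..)
  induction t with
  | zero =>
    simp only [histMeasure]
    rw [lintegral_dirac' _ (hVX 0)]
    exact le_rfl
  | succ t ih =>
    refine le_trans ?_ ih
    simp only [histMeasure]
    rw [Measure.lintegral_bind (measurable_step ν t (fun h => arm K hK D m (X K N D m τ t h))
      ((measurable_arm K hK D m).comp (measurable_X K N D m τ t))).aemeasurable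
      (hVX (t + 1)).aemeasurable]
    refine lintegral_mono fun h => ?_
    rw [lintegral_map (hVX (t + 1)) (measurable_snoc h)]
    refine le_trans (le_of_eq ?_) (hstep _)
    refine lintegral_congr fun y => ?_
    simp [X]

/-! ### time invariant -/

lemma X_time (K N D m : ℕ) (hm : 0 < m) (τ : ℝ) (t : ℕ) (h : Fin t → ℝ) :
    (X K N D m τ t h).1.1 = N ∨ ((X K N D m τ t h).1.1 < N ∧ (X K N D m τ t h).1.2.1 < 3 * m ∧
      3 * m * (X K N D m τ t h).1.1 + (X K N D m τ t h).1.2.1 = t) := by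
  induction t with
  | zero => simp only [X]; omega
  | succ t ih =>
    have := ih (fun i => h i.castSucc)
    simp only [X]
    generalize X K N D m τ t (fun i => h i.castSucc) = x at *
    unfold nxt
    split_ifs with h1 h2
    · left; omega
    · right; simp only; omega
    · simp only
      rw [mul_add]
      omega

lemma X_final (K N D m : ℕ) (hm : 0 < m) (τ : ℝ) (T : ℕ) (hT : 3 * m * N ≤ T) (h : Fin T → ℝ) :
    (X K N D m τ T h).1.1 = N := by
  rcases X_time K N D m hm τ T h with h1 | ⟨h1, h2, h3⟩
  · exact h1
  · exfalso
    have : 3 * m * ((X K N D m τ T h).1.1 + 1) ≤ 3 * m * N := Nat.mul_le_mul_left _ h1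
    rw [mul_add] at this
    omega

/-! ### Tree combinatorics -/

def J (D k0 l : ℕ) : ℕ := k0 * 2 ^ l / 2 ^ D

lemma J_succ (D k0 l : ℕ) : J D k0 (l + 1) / 2 = J D k0 l := by
  unfold J
  rw [Nat.div_div_eq_div_mul, pow_succ, ← mul_assoc, Nat.mul_div_mul_right _ _ (by norm_num)]

lemma ex_e (D k0 l i : ℕ) : ∃ e, i / 2 ^ e = J D k0 l / 2 ^ e := by
  refine ⟨i + J D k0 l, ?_⟩
  rw [Nat.div_eq_of_lt, Nat.div_eq_of_lt]
  · exact lt_of_le_of_lt (Nat.le_add_left _ _) Nat.lt_two_pow_self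
  · exact lt_of_le_of_lt (Nat.le_add_right _ _) Nat.lt_two_pow_self

noncomputable def ee (D k0 l i : ℕ) : ℕ := by
  classical exact Nat.find (ex_e D k0 l i)

lemma ee_spec (D k0 l i : ℕ) : i / 2 ^ (ee D k0 l i) = J D k0 l / 2 ^ (ee D k0 l i) := by
  classical exact Nat.find_spec (ex_e D k0 l i)

lemma ee_le (D k0 l i e : ℕ) (h : i / 2 ^ e = J D k0 l / 2 ^ e) : ee D k0 l i ≤ e := by
  classical exact Nat.find_min' (ex_e D k0 l i) h

noncomputable def psi (D k0 : ℕ) (p : ℕ × ℕ) : ℤ := p.1 - 2 * ee D k0 p.1 p.2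

lemma psi_child (D k0 l i b : ℕ) (hb : (2 * i + b) / 2 = i) :
    psi D k0 (l, i) - 1 ≤ psi D k0 (l + 1, 2 * i + b) := by
  have : ee D k0 (l + 1) (2 * i + b) ≤ ee D k0 l i + 1 := by
    apply ee_le
    rw [pow_succ', ← Nat.div_div_eq_div_mul, ← Nat.div_div_eq_div_mul, hb, J_succ]
    exact ee_spec ..
  simp only [psi]; push_cast; omega

lemma psi_up (D k0 l i : ℕ) (hk : k0 < 2 ^ D) : psi D k0 (l, i) - 1 ≤ psi D k0 (up l i) ∧
    (i ≠ J D k0 l → psi D k0 (l, i) + 1 ≤ psi D k0 (up l i)) := by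
  have hspec := ee_spec D k0 l i
  have hne : i ≠ J D k0 l → ee D k0 l i ≠ 0 := by
    intro h h0
    rw [h0] at hspec
    simp at hspec
    exact h hspec
  rcases l with _ | l
  · have h0 : ee D k0 0 0 ≤ 0 := by
      apply ee_le
      simp [J, Nat.div_eq_of_lt hk]
    simp only [up, psi, if_true]
    push_cast
    constructor
    · omega
    · intro h; have := hne h; omega
  · simp only [up, psi, Nat.add_sub_cancel, Nat.succ_ne_zero, if_false]
    rcases he : ee D k0 (l + 1) i with _ | e
    · rw [he] at hspec
      have h0 : ee D k0 l (i / 2) ≤ 0 := by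
        apply ee_le
        simp only [pow_zero, Nat.div_one] at hspec ⊢
        rw [hspec, J_succ]
      push_cast
      exact ⟨by omega, fun h => absurd he (hne h)⟩
    · rw [he, pow_succ', ← Nat.div_div_eq_div_mul, ← Nat.div_div_eq_div_mul, J_succ] at hspec
      have h0 := ee_le _ _ _ _ _ hspec
      push_cast
      exact ⟨by omega, fun _ => by omega⟩

lemma psi_bad (D k0 l i : ℕ) (hk : k0 < 2 ^ D) (a b c : Prop) :
    psi D k0 (l, i) - 1 ≤ psi D k0 (move l i a b c) := by
  unfold move
  split_ifs
  · exact psi_child D k0 l i 1 (by omega)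
  · exact psi_child D k0 l i 0 (by omega)
  · exact (psi_up D k0 l i hk).1

lemma qry0 (D l i k0 : ℕ) : qry D l i 0 ≤ k0 ↔ i * 2 ^ D ≤ k0 * 2 ^ l := by
  simp only [qry, if_true]
  rw [ceilDiv_le_iff_le_mul (by positivity), mul_comm k0]
lemma qry1 (D l i k0 : ℕ) : qry D l i 1 ≤ k0 ↔ (2 * i + 1) * 2 ^ D ≤ k0 * 2 ^ (l + 1) := by
  simp only [qry, if_true]
  rw [if_neg (by decide), ceilDiv_le_iff_le_mul (by positivity), mul_comm k0]
lemma qry2 (D l i k0 : ℕ) : qry D l i 2 ≤ k0 ↔ (i + 1) * 2 ^ D ≤ k0 * 2 ^ l := by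
  simp only [qry]
  rw [if_neg (by decide), if_neg (by decide), ceilDiv_le_iff_le_mul (by positivity), mul_comm k0]

lemma psi_good (D k0 l i : ℕ) (hk : k0 < 2 ^ D) (a b c : Prop)
    (ha : a ↔ qry D l i 0 ≤ k0) (hb : b ↔ qry D l i 1 ≤ k0) (hc : c ↔ qry D l i 2 ≤ k0) :
    psi D k0 (l, i) + 1 ≤ psi D k0 (move l i a b c) := by
  rw [qry0, ← Nat.le_div_iff_mul_le (by positivity)] at ha
  rw [qry1, ← Nat.le_div_iff_mul_le (by positivity)] at hb
  rw [qry2, ← Nat.le_div_iff_mul_le (by positivity)] at hc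
  have hJ := J_succ D k0 l
  change a ↔ i ≤ J D k0 l at ha
  change b ↔ _ ≤ J D k0 (l + 1) at hb
  change c ↔ _ ≤ J D k0 l at hc
  have key : ∀ i', i' = J D k0 (l + 1) → psi D k0 (l, i) + 1 ≤ psi D k0 (l + 1, i') := by
    intro i' h
    have : ee D k0 (l + 1) i' ≤ 0 := by
      apply ee_le; rw [h]
    simp only [psi]; push_cast; omega
  unfold move
  split_ifs with h1 h2
  · apply key
    rw [ha, hc] at h1
    rw [hb] at h2
    omega
  · apply key
    rw [ha, hc] at h1
    rw [hb] at h2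
    omega
  · apply (psi_up D k0 l i hk).2
    rw [ha, hc] at h1
    omega

lemma psi_out (D k0 l i : ℕ) (h : (D : ℤ) ≤ psi D k0 (l, i)) : i / 2 ^ (l - D) = k0 := by
  have hspec := ee_spec D k0 l i
  simp only [psi] at h
  set e := ee D k0 l i
  obtain ⟨r, hr⟩ : ∃ r, l - D = e + r := ⟨l - D - e, by omega⟩
  have hl : l = D + (e + r) := by omega
  rw [hr, pow_add, ← Nat.div_div_eq_div_mul, hspec]
  unfold J
  rw [hl, pow_add, mul_left_comm, Nat.mul_div_cancel_left _ (by positivity),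
    Nat.div_div_eq_div_mul, ← pow_add, Nat.mul_div_cancel _ (by positivity)]

end PDMTB

namespace PDMTB

/-! ### The potential -/

noncomputable def Fac (K : ℕ) (hK : 0 < K) (D m : ℕ) (s : Fin K → ℝ) (lam δ : ℝ)
    (l i j : ℕ) (S : Fin 3 → ℝ) : ℝ :=
  1 + Real.exp (m * δ) * ∑ g, Real.exp (-lam * s (armOf K hK (qry D l i g)) * S g) *
    Real.exp (-δ * rem m g j)

noncomputable def Pre (D m k0 : ℕ) (δ : ℝ) (n : ℕ) (p : ℕ × ℕ) : ℝ :=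
  (1 / 4) ^ (n + 1) * Real.exp (m * δ * (n - psi D k0 p) / 2)

noncomputable def W (K : ℕ) (hK : 0 < K) (D m k0 : ℕ) (s : Fin K → ℝ) (lam δ : ℝ) (x : St) : ℝ :=
  Pre D m k0 δ x.1.1 x.1.2.2 * Fac K hK D m s lam δ x.1.2.2.1 x.1.2.2.2 x.1.2.1 x.2

lemma Pre_pos (D m k0 : ℕ) (δ : ℝ) (n : ℕ) (p : ℕ × ℕ) : 0 < Pre D m k0 δ n p := by
  unfold Pre; positivity

lemma one_le_Fac (K : ℕ) (hK : 0 < K) (D m : ℕ) (s : Fin K → ℝ) (lam δ : ℝ)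
    (l i j : ℕ) (S : Fin 3 → ℝ) : 1 ≤ Fac K hK D m s lam δ l i j S := by
  unfold Fac
  have : 0 ≤ Real.exp (m * δ) * ∑ g, Real.exp (-lam * s (armOf K hK (qry D l i g)) * S g) *
    Real.exp (-δ * rem m g j) := by positivity
  linarith

lemma measurable_W (K : ℕ) (hK : 0 < K) (D m k0 : ℕ) (s : Fin K → ℝ) (lam δ : ℝ) :
    Measurable (W K hK D m k0 s lam δ) := by
  refine measurable_from_prod_countable_right fun d => ?_
  unfold W Fac
  simp only
  fun_prop

lemma Fac_zero (K : ℕ) (hK : 0 < K) (D m : ℕ) (s : Fin K → ℝ) (lam δ : ℝ)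
    (l i : ℕ) : Fac K hK D m s lam δ l i 0 0 = 4 := by
  have h : ∀ g, rem m g 0 = m := by
    intro g; unfold rem; split_ifs <;> omega
  unfold Fac
  simp only [h, Pi.zero_apply, mul_zero, Real.exp_zero, one_mul, Finset.sum_const, Finset.card_univ,
    Fintype.card_fin, nsmul_eq_mul]
  have : Real.exp (m * δ) * Real.exp (-δ * m) = 1 := by
    rw [← Real.exp_add]; simp; ring
  push_cast
  linear_combination 3 * this

lemma rem_other (m : ℕ) (g : Fin 3) (j : ℕ) (h : g ≠ grp m j) : rem m g (j + 1) = rem m g j := by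
  unfold rem
  unfold grp at h
  fin_cases g <;> simp at h ⊢ <;> split_ifs at h <;> omega

lemma rem_same (m : ℕ) (g : Fin 3) (j : ℕ) : rem m g j ≤ rem m g (j + 1) + 1 := by
  unfold rem
  split_ifs <;> omega

lemma rem_end (m : ℕ) (g : Fin 3) (j : ℕ) (h : 3 * m ≤ j) : rem m g j = 0 := by
  unfold rem
  split_ifs <;> omega

lemma mv_bound (K : ℕ) (hK : 0 < K) (D m k0 : ℕ) (hk : k0 < 2 ^ D) (s : Fin K → ℝ) (lam δ : ℝ)
    (hδ : 0 ≤ δ)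
    (hvote : ∀ c r, ¬(vote K c r ↔ c ≤ k0) → 1 ≤ Real.exp (-lam * s (armOf K hK c) * r))
    (n l i j : ℕ) (hj : 3 * m ≤ j) (S : Fin 3 → ℝ) :
    Pre D m k0 δ (n + 1) (mv K D l i S) * 4 ≤
      Pre D m k0 δ n (l, i) * Fac K hK D m s lam δ l i j S := by
  have hκ : 0 ≤ m * δ := by positivity
  have e1 : ∀ p, Pre D m k0 δ (n + 1) p * 4 =
      (1 / 4) ^ (n + 1) * Real.exp (m * δ * (n + 1 - psi D k0 p) / 2) := by
    intro p; unfold Pre; rw [pow_succ _ (n + 1)]; push_cast; ring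
  rw [e1]
  unfold Pre
  rw [mul_assoc ((1 / 4 : ℝ) ^ (n + 1))]
  have hq : (0 : ℝ) ≤ (1 / 4) ^ (n + 1) := by positivity
  refine mul_le_mul_of_nonneg_left ?_ hq
  by_cases hg : ∀ g, (vote K (qry D l i g) (S g) ↔ qry D l i g ≤ k0)
  · have h1 := psi_good D k0 l i hk _ _ _ (hg 0) (hg 1) (hg 2)
    change _ ≤ psi D k0 (mv K D l i S) at h1
    have h2 : (psi D k0 (l, i) : ℝ) + 1 ≤ psi D k0 (mv K D l i S) := by exact_mod_cast h1
    refine le_trans ?_ (le_mul_of_one_le_right (by positivity) (one_le_Fac ..))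
    apply Real.exp_le_exp.2
    have := mul_le_mul_of_nonneg_left h2 hκ
    nlinarith
  · obtain ⟨g, hg'⟩ := not_forall.1 hg
    have h1 := hvote _ _ hg'
    have h3 := psi_bad D k0 l i hk (vote K (qry D l i 0) (S 0)) (vote K (qry D l i 1) (S 1))
      (vote K (qry D l i 2) (S 2))
    change _ ≤ psi D k0 (mv K D l i S) at h3
    have h2 : (psi D k0 (l, i) : ℝ) - 1 ≤ psi D k0 (mv K D l i S) := by exact_mod_cast h3
    have h4 : Real.exp (m * δ) ≤ Fac K hK D m s lam δ l i j S := by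
      unfold Fac
      have h5 : (1 : ℝ) ≤ ∑ g, Real.exp (-lam * s (armOf K hK (qry D l i g)) * S g) *
          Real.exp (-δ * rem m g j) := by
        refine le_trans ?_ (Finset.single_le_sum (f := fun g =>
          Real.exp (-lam * s (armOf K hK (qry D l i g)) * S g) *
          Real.exp (-δ * rem m g j)) (fun _ _ => by positivity) (Finset.mem_univ g))
        simp only [rem_end m g j hj]
        simpa using h1
      have := mul_le_mul_of_nonneg_left h5 (Real.exp_pos (m * δ)).le
      linarith
    refine le_trans ?_ (mul_le_mul_of_nonneg_left h4 (by positivity))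
    rw [← Real.exp_add]
    apply Real.exp_le_exp.2
    have := mul_le_mul_of_nonneg_left h2 hκ
    nlinarith

lemma W_nxt (K : ℕ) (hK : 0 < K) (N D m k0 : ℕ) (hk : k0 < 2 ^ D) (s : Fin K → ℝ) (lam δ τ : ℝ)
    (hδ : 0 ≤ δ)
    (hvote : ∀ c r, ¬(vote K c r ↔ c ≤ k0) → 1 ≤ Real.exp (-lam * s (armOf K hK c) * r))
    (x : St) (hx : ¬ N ≤ x.1.1) (y : ℝ) :
    W K hK D m k0 s lam δ (nxt K N D m τ x y) ≤ Pre D m k0 δ x.1.1 x.1.2.2 *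
      Fac K hK D m s lam δ x.1.2.2.1 x.1.2.2.2 (x.1.2.1 + 1) (upd m τ x.1.2.1 x.2 y) := by
  unfold nxt
  rw [if_neg hx]
  split_ifs with h
  · exact le_rfl
  · unfold W
    simp only
    rw [Fac_zero]
    exact mv_bound K hK D m k0 hk s lam δ hδ hvote _ _ _ _ (by omega) _

lemma lint_aff (ν : Measure ℝ) [IsProbabilityMeasure ν] (A C r : ℝ) (hA : 0 ≤ A) (hC : 0 ≤ C)
    (f : ℝ → ℝ) (hf : ∀ y, 0 ≤ f y) (hr : 0 ≤ r)
    (hfm : Measurable f) (h : ∫⁻ y, ENNReal.ofReal (f y) ∂ν ≤ ENNReal.ofReal r) :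
    ∫⁻ y, ENNReal.ofReal (A + C * f y) ∂ν ≤ ENNReal.ofReal (A + C * r) := by
  have : ∀ y, ENNReal.ofReal (A + C * f y) =
      ENNReal.ofReal A + ENNReal.ofReal C * ENNReal.ofReal (f y) := by
    intro y
    rw [ENNReal.ofReal_add hA (mul_nonneg hC (hf y)), ENNReal.ofReal_mul hC]
  simp_rw [this]
  rw [lintegral_add_left measurable_const, lintegral_const_mul _ (by fun_prop), lintegral_const,
    measure_univ, mul_one, ENNReal.ofReal_add hA (mul_nonneg hC hr), ENNReal.ofReal_mul hC]
  gcongr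

lemma W_step (K : ℕ) (hK : 0 < K) (N D m k0 : ℕ) (hk : k0 < 2 ^ D) (s : Fin K → ℝ) (lam δ τ : ℝ)
    (hδ : 0 ≤ δ)
    (hvote : ∀ c r, ¬(vote K c r ↔ c ≤ k0) → 1 ≤ Real.exp (-lam * s (armOf K hK c) * r))
    (ν : Fin K → Measure ℝ) [∀ k, IsProbabilityMeasure (ν k)]
    (harm : ∀ k, ∫⁻ y, ENNReal.ofReal (Real.exp (-lam * s k * (y - τ))) ∂(ν k) ≤
      ENNReal.ofReal (Real.exp (-δ))) (x : St) :
    ∫⁻ y, ENNReal.ofReal (W K hK D m k0 s lam δ (nxt K N D m τ x y)) ∂(ν (arm K hK D m x)) ≤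
      ENNReal.ofReal (W K hK D m k0 s lam δ x) := by
  by_cases hx : N ≤ x.1.1
  · simp only [nxt, if_pos hx]
    simp
  obtain ⟨⟨n, j, l, i⟩, S⟩ := x
  simp only at hx
  set g0 := grp m j with hg0
  set P := Pre D m k0 δ n (l, i) with hP
  have hPpos : 0 < P := Pre_pos ..
  set k := armOf K hK (qry D l i g0) with hk'
  have hka : arm K hK D m ((n, j, l, i), S) = k := rfl
  rw [hka]
  set R : ℝ := ∑ g ∈ Finset.univ.erase g0,
    Real.exp (-lam * s (armOf K hK (qry D l i g)) * S g) * Real.exp (-δ * rem m g j) with hR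
  have hR0 : 0 ≤ R := by positivity
  set A : ℝ := P * (1 + Real.exp (m * δ) * R) with hA
  set C : ℝ := P * (Real.exp (m * δ) * (Real.exp (-lam * s k * S g0) *
    Real.exp (-δ * rem m g0 (j + 1)))) with hC
  have hpt : ∀ y, W K hK D m k0 s lam δ (nxt K N D m τ ((n, j, l, i), S) y) ≤
      A + C * Real.exp (-lam * s k * (y - τ)) := by
    intro y
    refine (W_nxt K hK N D m k0 hk s lam δ τ hδ hvote ((n, j, l, i), S) hx y).trans (le_of_eq ?_)
    simp only
    rw [← hP, hA, hC]
    unfold Fac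
    rw [← Finset.add_sum_erase _ _ (Finset.mem_univ g0)]
    have h1 : ∑ g ∈ Finset.univ.erase g0, Real.exp (-lam * s (armOf K hK (qry D l i g)) *
        upd m τ j S y g) * Real.exp (-δ * rem m g (j + 1)) = R := by
      refine Finset.sum_congr rfl fun g hg => ?_
      have hne := (Finset.mem_erase.1 hg).1
      rw [rem_other m g j hne]
      simp only [upd]
      rw [if_neg hne]
    rw [h1]
    have h2 : upd m τ j S y g0 = S g0 + (y - τ) := by simp [upd, hg0]
    rw [h2, ← hk', mul_add (-lam * s k), Real.exp_add]
    ring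
  have hfin : A + C * Real.exp (-δ) ≤ W K hK D m k0 s lam δ ((n, j, l, i), S) := by
    unfold W
    simp only
    rw [← hP]
    unfold Fac
    rw [← Finset.add_sum_erase _ _ (Finset.mem_univ g0), ← hR, ← hk']
    have h1 : Real.exp (-δ * rem m g0 (j + 1)) * Real.exp (-δ) ≤ Real.exp (-δ * rem m g0 j) := by
      rw [← Real.exp_add]
      apply Real.exp_le_exp.2
      have h3 : (rem m g0 j : ℝ) ≤ rem m g0 (j + 1) + 1 := by exact_mod_cast rem_same m g0 j
      nlinarith
    have h2 : A + C * Real.exp (-δ) = P * (1 + Real.exp (m * δ) * (Real.exp (-lam * s k * S g0) *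
      (Real.exp (-δ * rem m g0 (j + 1)) * Real.exp (-δ)) + R)) := by
      rw [hA, hC]; ring
    rw [h2]
    gcongr
  calc _ ≤ ∫⁻ y, ENNReal.ofReal (A + C * Real.exp (-lam * s k * (y - τ))) ∂(ν k) :=
        lintegral_mono fun y => ENNReal.ofReal_le_ofReal (hpt y)
    _ ≤ ENNReal.ofReal (A + C * Real.exp (-δ)) :=
        lint_aff _ _ _ _ (by positivity) (by positivity) _ (fun y => by positivity)
          (by positivity) (by fun_prop) (harm k)
    _ ≤ _ := ENNReal.ofReal_le_ofReal hfin

lemma arm_mgf (ν : Measure ℝ) (σ μ τ Δ s : ℝ) (hσ : 0 < σ) (hΔ : 0 ≤ Δ)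
    (h : IsSubGaussianArm (σ ^ 2) μ ν) (hs : s ^ 2 = 1) (hsμ : Δ ≤ s * (μ - τ)) :
    ∫⁻ y, ENNReal.ofReal (Real.exp (-(Δ / σ ^ 2) * s * (y - τ))) ∂ν ≤
      ENNReal.ofReal (Real.exp (-(Δ ^ 2 / (2 * σ ^ 2)))) := by
  have h1 := h (-(Δ / σ ^ 2) * s)
  have h2 : ∀ y, ENNReal.ofReal (Real.exp (-(Δ / σ ^ 2) * s * (y - τ))) =
      ENNReal.ofReal (Real.exp (-(Δ / σ ^ 2) * (s * (μ - τ)))) *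
        ENNReal.ofReal (Real.exp (-(Δ / σ ^ 2) * s * (y - μ))) := by
    intro y
    rw [← ENNReal.ofReal_mul (by positivity), ← Real.exp_add]
    congr 2; ring
  simp_rw [h2]
  rw [lintegral_const_mul _ (by fun_prop)]
  refine (mul_le_mul_right h1 _).trans ?_
  rw [← ENNReal.ofReal_mul (by positivity), ← Real.exp_add]
  apply ENNReal.ofReal_le_ofReal
  apply Real.exp_le_exp.2
  have h3 : σ ^ 2 * (-(Δ / σ ^ 2) * s) ^ 2 / 2 = Δ ^ 2 / (2 * σ ^ 2) := by
    rw [mul_pow, hs]; field_simp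
  have h4 : Δ / σ ^ 2 * Δ ≤ Δ / σ ^ 2 * (s * (μ - τ)) :=
    mul_le_mul_of_nonneg_left hsμ (by positivity)
  have h5 : Δ / σ ^ 2 * Δ = 2 * (Δ ^ 2 / (2 * σ ^ 2)) := by field_simp
  rw [h3]
  linarith

end PDMTB

namespace PDMTB

lemma exists_D (K T : ℕ) (hK : 3 ≤ K) (hT : 36 * Real.log K < T) :
    ∃ D : ℕ, K < 2 ^ D ∧ 2 ^ D ≤ 2 * K ∧ 9 * D ≤ T := by
  refine ⟨Nat.log 2 K + 1, Nat.lt_pow_succ_log_self (by norm_num) K, ?_, ?_⟩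
  · have := Nat.pow_log_le_self 2 (show K ≠ 0 by omega)
    rw [pow_succ]; omega
  · have h1 := Nat.pow_log_le_self 2 (show K ≠ 0 by omega)
    have h2 : (2 : ℝ) ^ (Nat.log 2 K) ≤ K := by exact_mod_cast h1
    have h3 := Real.log_le_log (by positivity) h2
    rw [Real.log_pow] at h3
    have h4 : Real.log 2 ≤ Real.log K := Real.log_le_log (by norm_num) (by
      have : (3 : ℝ) ≤ K := by exact_mod_cast hK
      linarith)
    have h5 := Real.log_two_gt_d9
    have h6 : (9 * (Nat.log 2 K + 1) : ℝ) < T := by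
      refine lt_of_le_of_lt ?_ hT
      have h7 : (0 : ℝ) ≤ Nat.log 2 K := by positivity
      nlinarith
    exact_mod_cast h6.le

end PDMTB

/-- Problem dependent upper bound for the relaxed monotone thresholding bandit problem
(Theorem 2 together with Remark 2): for `T > 36 log K` there is a fixed-budget strategy
(PD-MTB) whose probability of error on every sub-Gaussian bandit problem whose means
satisfy the relaxed monotonicity condition is at most
`exp(−(1/48)·T·Δ_min²/σ² + 12·log K)`. -/
theorem relaxed_monotone_upper_bound
    (K T : ℕ) (hK : 3 ≤ K) (hT : 36 * Real.log K < T) (τ : ℝ) :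
    ∃ (π : (t : ℕ) → (Fin t → ℝ) → Fin K) (Qhat : (Fin T → ℝ) → Fin K → Bool),
      (∀ t, Measurable (π t)) ∧ Measurable Qhat ∧
      ∀ (σ : ℝ), 0 < σ → ∀ (ν : Fin K → Measure ℝ) (μ : Fin K → ℝ),
        (∀ k, IsProbabilityMeasure (ν k)) →
        (∀ k, ∫ x, x ∂ν k = μ k) →
        (∀ k, IsSubGaussianArm (σ ^ 2) (μ k) (ν k)) →
        RelaxedMonotone μ τ →
        histMeasure ν π T (errSet Qhat μ τ) ≤
          ENNReal.ofReal (Real.exp (-(1 / 48 : ℝ) * T * (⨅ k, |μ k - τ|) ^ 2 / σ ^ 2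
            + 12 * Real.log K)) := by
  classical
  have hK0 : 0 < K := by omega
  obtain ⟨D, hKD, hDK, hDT⟩ := PDMTB.exists_D K T hK hT
  have hD0 : 0 < D := by
    rcases Nat.eq_zero_or_pos D with h | h
    · subst h; simp at hKD; omega
    · exact h
  set m := T / (9 * D) with hm
  have hm0 : 0 < m := Nat.div_pos hDT (by omega)
  have hmT : 9 * D * m ≤ T := Nat.mul_div_le T (9 * D)
  have hmT2 : T < 9 * D * (m + 1) := by
    have := Nat.lt_mul_div_succ T (show 0 < 9 * D by omega)
    simpa using this
  refine ⟨fun t h => PDMTB.arm K hK0 D m (PDMTB.X K (3 * D) D m τ t h),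
    fun y k => decide ((PDMTB.X K (3 * D) D m τ T y).1.2.2.2 /
      2 ^ ((PDMTB.X K (3 * D) D m τ T y).1.2.2.1 - D) ≤ (k : ℕ)),
    fun t => (PDMTB.measurable_arm K hK0 D m).comp (PDMTB.measurable_X ..), ?_, ?_⟩
  · have h1 : Measurable (fun d : ℕ × ℕ × ℕ × ℕ => fun k : Fin K =>
        decide (d.2.2.2 / 2 ^ (d.2.2.1 - D) ≤ (k : ℕ))) := measurable_of_countable _
    exact h1.comp (measurable_fst.comp (PDMTB.measurable_X K (3 * D) D m τ T))
  intro σ hσ ν μ hν _ hsub hmon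
  set Δ := ⨅ k, |μ k - τ| with hΔ
  have hΔle : ∀ k, Δ ≤ |μ k - τ| := fun k =>
    ciInf_le (Set.finite_range (fun k => |μ k - τ|)).bddBelow k
  have hne : Nonempty (Fin K) := ⟨⟨0, hK0⟩⟩
  have hΔ0 : 0 ≤ Δ := le_ciInf fun k => abs_nonneg _
  have hlogK : 0 ≤ Real.log K := Real.log_natCast_nonneg K
  rcases hΔ0.eq_or_lt with h0 | hpos
  · have h1 := PDMTB.lyapunov hK0 (3 * D) D m τ ν (fun _ => 1) measurable_const (by simp) T
    simp only [lintegral_const, one_mul] at h1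
    refine (measure_mono (Set.subset_univ _)).trans (h1.trans ?_)
    rw [← h0, ← ENNReal.ofReal_one]
    apply ENNReal.ofReal_le_ofReal
    apply Real.one_le_exp
    simpa using hlogK
  obtain ⟨k0, hk0K, hk0⟩ := hmon
  have hneq : ∀ k, μ k ≠ τ := by
    intro k h
    have := hΔle k
    rw [h, sub_self, abs_zero] at this
    linarith
  have hlab : ∀ k : Fin K, τ ≤ μ k ↔ k0 ≤ (k : ℕ) := by
    intro k
    refine ⟨fun h => ?_, (hk0 k).2⟩
    by_contra h'
    exact hneq k (le_antisymm ((hk0 k).1 (not_le.1 h')) h)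
  set s : Fin K → ℝ := fun k => if τ ≤ μ k then 1 else -1 with hs
  have hs2 : ∀ k, s k ^ 2 = 1 := by
    intro k; simp only [hs]; split_ifs <;> norm_num
  have hsμ : ∀ k, Δ ≤ s k * (μ k - τ) := by
    intro k
    refine (hΔle k).trans (le_of_eq ?_)
    simp only [hs]
    split_ifs with h
    · rw [abs_of_nonneg (by linarith)]; ring
    · rw [abs_of_neg (by linarith)]; ring
  set lam := Δ / σ ^ 2 with hlam
  set δ := Δ ^ 2 / (2 * σ ^ 2) with hδ
  have hlam0 : 0 ≤ lam := by positivity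
  have hδ0 : 0 ≤ δ := by positivity
  have harm := fun k => PDMTB.arm_mgf (ν k) σ (μ k) τ Δ (s k) hσ hΔ0 (hsub k) (hs2 k) (hsμ k)
  have hk2 : k0 < 2 ^ D := by omega
  have hvote : ∀ c r, ¬(PDMTB.vote K c r ↔ c ≤ k0) →
      1 ≤ Real.exp (-lam * s (PDMTB.armOf K hK0 c) * r) := by
    intro c r h
    apply Real.one_le_exp
    unfold PDMTB.vote at h
    have hc0 : c ≠ 0 := by rintro rfl; simp at h
    have hcK : c ≤ K := by
      by_contra hc
      apply h
      constructor
      · rintro (h | h)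
        · exact absurd h hc0
        · exact absurd h.1 hc
      · intro h; omega
    have harmv : ((PDMTB.armOf K hK0 c : Fin K) : ℕ) = c - 1 := by
      simp only [PDMTB.armOf]; omega
    have hl := hlab (PDMTB.armOf K hK0 c)
    rw [harmv] at hl
    by_cases hck : c ≤ k0
    · have h1 : ¬ τ ≤ μ (PDMTB.armOf K hK0 c) := by rw [hl]; omega
      have h2 : 0 ≤ r := by
        by_contra hr
        exact h ⟨fun _ => hck, fun _ => Or.inr ⟨hcK, not_le.1 hr⟩⟩
      simp only [hs, if_neg h1]
      nlinarith [mul_nonneg hlam0 h2]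
    · have h1 : τ ≤ μ (PDMTB.armOf K hK0 c) := by rw [hl]; omega
      have h2 : r < 0 := by
        by_contra hr
        apply h
        constructor
        · rintro (h | h)
          · exact absurd h hc0
          · exact absurd h.2 hr
        · intro h; exact absurd h hck
      simp only [hs, if_pos h1]
      nlinarith [mul_nonneg hlam0 (neg_nonneg.2 h2.le)]
  have hmeas : Measurable (fun x => ENNReal.ofReal (PDMTB.W K hK0 D m k0 s lam δ x)) :=
    (PDMTB.measurable_W K hK0 D m k0 s lam δ).ennreal_ofReal
  have hly := PDMTB.lyapunov hK0 (3 * D) D m τ ν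
    (fun x => ENNReal.ofReal (PDMTB.W K hK0 D m k0 s lam δ x)) hmeas
    (PDMTB.W_step K hK0 (3 * D) D m k0 hk2 s lam δ τ hδ0 hvote ν harm) T
  have hstart : PDMTB.W K hK0 D m k0 s lam δ ((0, 0, 0, 0), 0) ≤ 1 := by
    unfold PDMTB.W
    simp only
    rw [PDMTB.Fac_zero]
    have he : PDMTB.ee D k0 0 0 ≤ 0 := by
      apply PDMTB.ee_le
      simp [PDMTB.J, Nat.div_eq_of_lt hk2]
    have he' : PDMTB.psi D k0 (0, 0) = 0 := by
      simp only [PDMTB.psi]; push_cast; omega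
    unfold PDMTB.Pre
    rw [he']
    norm_num
  set c : ℝ := (1 / 4) ^ (3 * D + 1) * Real.exp (m * δ * D) with hc
  have hc0 : 0 < c := by positivity
  have hsubset : errSet (fun y k => decide ((PDMTB.X K (3 * D) D m τ T y).1.2.2.2 /
      2 ^ ((PDMTB.X K (3 * D) D m τ T y).1.2.2.1 - D) ≤ (k : ℕ))) μ τ ⊆
      {y | ENNReal.ofReal c ≤
        ENNReal.ofReal (PDMTB.W K hK0 D m k0 s lam δ (PDMTB.X K (3 * D) D m τ T y))} := by
    intro y hy
    obtain ⟨k, hk⟩ := hy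
    simp only [decide_eq_true_eq] at hk
    apply ENNReal.ofReal_le_ofReal
    have hn := PDMTB.X_final K (3 * D) D m hm0 τ T (by nlinarith) y
    generalize PDMTB.X K (3 * D) D m τ T y = x at hk hn
    have hpsi : ¬ (D : ℤ) ≤ PDMTB.psi D k0 x.1.2.2 := by
      intro h
      have := PDMTB.psi_out D k0 _ _ h
      apply hk
      rw [this]
      exact propext (hlab k).symm
    have hpsi' : (PDMTB.psi D k0 x.1.2.2 : ℝ) ≤ D := by
      exact_mod_cast (not_le.1 hpsi).le
    unfold PDMTB.W
    refine le_trans ?_ (le_mul_of_one_le_right (PDMTB.Pre_pos ..).le (PDMTB.one_le_Fac ..))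
    unfold PDMTB.Pre
    rw [hn, hc]
    have hq : (0 : ℝ) ≤ (1 / 4) ^ (3 * D + 1) := by positivity
    refine mul_le_mul_of_nonneg_left (Real.exp_le_exp.2 ?_) hq
    have := mul_le_mul_of_nonneg_left hpsi' (show (0 : ℝ) ≤ m * δ by positivity)
    push_cast
    linarith
  refine (measure_mono hsubset).trans ?_
  refine (meas_ge_le_lintegral_div (hmeas.comp (PDMTB.measurable_X ..)).aemeasurable
    (by simpa using hc0) ENNReal.ofReal_ne_top).trans ?_
  rw [ENNReal.div_le_iff (by simpa using hc0) ENNReal.ofReal_ne_top,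
    ← ENNReal.ofReal_mul (by positivity)]
  refine hly.trans (ENNReal.ofReal_le_ofReal (hstart.trans ?_))
  have hKpos : (0 : ℝ) < K := by exact_mod_cast hK0
  have hK12 : Real.exp (12 * Real.log K) = (K : ℝ) ^ 12 := by
    rw [← Real.rpow_natCast, Real.rpow_def_of_pos hKpos]; norm_num; ring
  rw [Real.exp_add, hK12, hc]
  have hpow : (4 : ℝ) ^ (3 * D + 1) ≤ (K : ℝ) ^ 12 := by
    have h1 : (4 : ℕ) ^ (3 * D + 1) = 4 * (2 ^ D) ^ 6 := by
      rw [pow_succ, show (4 : ℕ) = 2 ^ 2 by norm_num, ← pow_mul, ← pow_mul]; ring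
    have h2 : (2 ^ D) ^ 6 ≤ (2 * K) ^ 6 := Nat.pow_le_pow_left hDK 6
    have h3 : 3 ^ 6 ≤ K ^ 6 := Nat.pow_le_pow_left hK 6
    have h4 : (4 : ℕ) ^ (3 * D + 1) ≤ K ^ 12 := by
      rw [h1]
      calc 4 * (2 ^ D) ^ 6 ≤ 4 * (2 * K) ^ 6 := by omega
        _ = 256 * K ^ 6 := by ring
        _ ≤ K ^ 6 * K ^ 6 := Nat.mul_le_mul_right _ (by omega)
        _ = K ^ 12 := by ring
    exact_mod_cast h4
  have hexp : 1 ≤ Real.exp (-(1 / 48 : ℝ) * T * Δ ^ 2 / σ ^ 2) * Real.exp (m * δ * D) := by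
    rw [← Real.exp_add]
    apply Real.one_le_exp
    have h1 : (T : ℝ) ≤ 18 * D * m := by
      have : T ≤ 18 * D * m := by nlinarith
      exact_mod_cast this
    have h2 : -(1 / 48 : ℝ) * T * Δ ^ 2 / σ ^ 2 = -(1 / 24) * T * δ := by
      rw [hδ]; field_simp; ring
    rw [h2]
    have hDm : (0 : ℝ) ≤ D * m := by positivity
    have h3 : 0 ≤ δ * (m * D - 1 / 24 * T) := mul_nonneg hδ0 (by nlinarith)
    nlinarith
  have h4 : (4 : ℝ) ^ (3 * D + 1) * (1 / 4) ^ (3 * D + 1) = 1 := by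
    rw [← mul_pow]; norm_num
  calc (1 : ℝ) = 1 * ((4 : ℝ) ^ (3 * D + 1) * (1 / 4) ^ (3 * D + 1)) := by rw [h4, one_mul]
    _ ≤ (Real.exp (-(1 / 48 : ℝ) * T * Δ ^ 2 / σ ^ 2) * Real.exp (m * δ * D)) *
        ((K : ℝ) ^ 12 * (1 / 4) ^ (3 * D + 1)) := by gcongr
    _ = _ := by ring
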